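/- Let F(x,y) = ((x − s(y))/2 + (√3/2)y, −(√3/2)(x − s(y)) + y/2). Every point of the grid 𝔉 (the non zero-free set of F) is a periodic point of F, and its minimal period is of the form 36n+6, 18n+9, 18n+15, or 108n+72 for some n ∈ ℕ₀. Moreover, F is pointwise periodic on all of ℝ², and the set of minimal periods of points of F equals {6n+1 : n ∈ ℕ₀} ∪ {12n+8 : n ∈ ℕ₀} ∪ {12n+10 : n ∈ ℕ₀} ∪ {18n+9 : n ∈ ℕ₀} ∪ {18n+15 : n ∈ ℕ₀} ∪ {36n+6 : n ∈ ℕ₀} ∪ {36n+24 : n ∈ ℕ₀} ∪ {36n+30 : n ∈ ℕ₀} ∪ {108n+72 : n ∈ ℕ₀}. -/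

import Mathlib

noncomputable def s (y : ℝ) : ℝ := if 0 ≤ y then 1 else -1

/-- The map `F_α` of the paper for `α = π/3`. -/
noncomputable def F (q : ℝ × ℝ) : ℝ × ℝ :=
  ((q.1 - s q.2) / 2 + (Real.sqrt 3 / 2) * q.2,
   -(Real.sqrt 3 / 2) * (q.1 - s q.2) + q.2 / 2)

/-- The grid `𝔉` (trihexagonal tiling lines) of the `α = π/3` map. -/
def grid : Set (ℝ × ℝ) :=
  {q | (∃ k : ℤ, q.2 = Real.sqrt 3 * (q.1 - 2 * k - 1)) ∨
       (∃ ℓ : ℤ, q.2 = Real.sqrt 3 * ℓ) ∨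
       (∃ m : ℤ, q.2 = -Real.sqrt 3 * (q.1 - 2 * m))}
open Function

/-- The minimal period of a point of a section is the sum of the return times along the orbit of
the first return map `g`, the section being parametrized by `φ` on `V`. -/
theorem minimalPeriod_eq_sum_returnTime {α β : Type*} {f : α → α} {g : β → β} {φ : β → α}
    {V : Set β} {τ : β → ℕ} (hτ : ∀ x ∈ V, 0 < τ x) (hV : Set.MapsTo g V V)
    (hφ : Set.InjOn φ V) (hret : ∀ x ∈ V, f^[τ x] (φ x) = φ (g x))
    (hfirst : ∀ x ∈ V, ∀ y ∈ V, ∀ i, 0 < i → i < τ x → f^[i] (φ x) ≠ φ y)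
    {x : β} (hx : x ∈ V) (hp : x ∈ periodicPts g) :
    minimalPeriod f (φ x) = ∑ i ∈ Finset.range (minimalPeriod g x), τ (g^[i] x) := by
  have hVi : ∀ k, g^[k] x ∈ V := fun k => hV.iterate k hx
  set S : ℕ → ℕ := fun k => ∑ i ∈ Finset.range k, τ (g^[i] x) with hSdef
  have hS0 : S 0 = 0 := by simp [hSdef]
  have hSs : ∀ k, S (k + 1) = S k + τ (g^[k] x) := fun k => Finset.sum_range_succ _ _
  have hSmono : StrictMono S := strictMono_nat_of_lt_succ fun k => by
    have := hτ _ (hVi k)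
    rw [hSs]; omega
  have hS : ∀ k, f^[S k] (φ x) = φ (g^[k] x) := by
    intro k
    induction k with
    | zero => simp [hS0]
    | succ k ih =>
      rw [hSs, add_comm, iterate_add_apply, ih, hret _ (hVi k), iterate_succ_apply']
  have hK : 0 < minimalPeriod g x := minimalPeriod_pos_of_mem_periodicPts hp
  have hper : IsPeriodicPt f (S (minimalPeriod g x)) (φ x) := by
    change f^[_] _ = _
    rw [hS, iterate_minimalPeriod]
  have hSK : 0 < S (minimalPeriod g x) := hS0 ▸ hSmono hK
  refine le_antisymm (hper.minimalPeriod_le hSK) ?_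
  have hm : 0 < minimalPeriod f (φ x) := hper.minimalPeriod_pos hSK
  have hmx : f^[minimalPeriod f (φ x)] (φ x) = φ x := iterate_minimalPeriod
  set m := minimalPeriod f (φ x)
  have hex : ∃ k, m < S (k + 1) := ⟨m, lt_of_lt_of_le (Nat.lt_succ_self m) (hSmono.id_le _)⟩
  obtain ⟨k, hk1, hk2⟩ : ∃ k, S k ≤ m ∧ m < S (k + 1) := by
    classical
    refine ⟨Nat.find hex, ?_, Nat.find_spec hex⟩
    rcases h : Nat.find hex with _ | k
    · omega
    · have := Nat.find_min hex (m := k) (by omega)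
      omega
  have hi : f^[m - S k] (φ (g^[k] x)) = φ x := by
    rw [← hS, ← iterate_add_apply, Nat.sub_add_cancel hk1, hmx]
  have hmk : m = S k := by
    by_contra hne
    have := hSs k
    exact hfirst _ (hVi k) x hx (m - S k) (by omega) (by omega) hi
  rw [hmk, Nat.sub_self, iterate_zero, id] at hi
  have hgk : IsPeriodicPt g k x := hφ (hVi k) hx hi
  have hk0 : 0 < k := by
    rcases Nat.eq_zero_or_pos k with h | h
    · rw [h, hS0] at hmk; omega
    · exact h
  rw [hmk]
  exact hSmono.monotone (hgk.minimalPeriod_le hk0)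

theorem minimalPeriod_iterate_of_injective {α : Type*} {f : α → α} (hf : Injective f) (n : ℕ)
    (x : α) : minimalPeriod f (f^[n] x) = minimalPeriod f x := by
  refine minimalPeriod_eq_minimalPeriod_iff.2 fun m => ?_
  change f^[m] (f^[n] x) = f^[n] x ↔ f^[m] x = x
  rw [← iterate_add_apply, add_comm, iterate_add_apply]
  exact (hf.iterate n).eq_iff

theorem minimalPeriod_eq_of_dvd_108 {α : Type*} {f : α → α} {x : α} {k : ℕ} (hk : k ∣ 108)
    (h : f^[k] x = x) (h2 : 2 ∣ k → f^[k / 2] x ≠ x) (h3 : 3 ∣ k → f^[k / 3] x ≠ x) :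
    minimalPeriod f x = k := by
  have hk0 : 0 < k := Nat.pos_of_dvd_of_pos hk (by norm_num)
  have hd : minimalPeriod f x ∣ k := IsPeriodicPt.minimalPeriod_dvd h
  obtain ⟨c, hc⟩ := hd
  by_cases hc1 : c = 1
  · rw [hc, hc1, mul_one]
  · exfalso
    obtain ⟨q, hq, r, rfl⟩ := Nat.exists_prime_and_dvd hc1
    have hqk : q ∣ k := ⟨minimalPeriod f x * r, by rw [hc]; ring⟩
    have hkq : f^[k / q] x = x := by
      have : k / q = minimalPeriod f x * r := by
        rw [hc]
        apply Nat.div_eq_of_eq_mul_left hq.pos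
        ring
      rw [this]
      exact (isPeriodicPt_minimalPeriod f x).mul_const r
    have h23 : q ∣ 2 ^ 2 * 3 ^ 3 := hqk.trans hk
    rcases hq.dvd_mul.1 h23 with h' | h'
    · obtain rfl := (Nat.prime_dvd_prime_iff_eq hq Nat.prime_two).1 (hq.dvd_of_dvd_pow h')
      exact h2 hqk hkq
    · obtain rfl := (Nat.prime_dvd_prime_iff_eq hq Nat.prime_three).1 (hq.dvd_of_dvd_pow h')
      exact h3 hqk hkq

/-- The map `F` in the coordinates `(x + y / √3, 2 y / √3)`. -/
noncomputable def latticeMap (p : ℝ × ℝ) : ℝ × ℝ :=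
  (p.2, if 0 ≤ p.2 then p.2 - p.1 + 1 else p.2 - p.1 - 1)

noncomputable def toLattice (q : ℝ × ℝ) : ℝ × ℝ :=
  (q.1 + q.2 / Real.sqrt 3, 2 * (q.2 / Real.sqrt 3))

noncomputable def ofLattice (p : ℝ × ℝ) : ℝ × ℝ :=
  (p.1 - p.2 / 2, Real.sqrt 3 * (p.2 / 2))

theorem toLattice_ofLattice (p : ℝ × ℝ) : toLattice (ofLattice p) = p := by
  have h3 : Real.sqrt 3 ≠ 0 := by positivity
  ext
  · simp only [toLattice, ofLattice]; field_simp; ring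
  · simp only [toLattice, ofLattice]; field_simp

theorem toLattice_injective : Injective toLattice := by
  intro p q h
  have h3 : Real.sqrt 3 ≠ 0 := by positivity
  simp only [toLattice, Prod.mk.injEq] at h
  obtain ⟨h1, h2⟩ := h
  have h4 : p.2 / Real.sqrt 3 = q.2 / Real.sqrt 3 := by linarith
  refine Prod.ext ?_ ((div_left_inj' h3).1 h4)
  rw [h4] at h1
  linarith

theorem latticeMap_of_nonneg {u v : ℝ} (h : 0 ≤ v) : latticeMap (u, v) = (v, v - u + 1) := by
  simp [latticeMap, h]

theorem latticeMap_of_neg {u v : ℝ} (h : v < 0) : latticeMap (u, v) = (v, v - u - 1) := by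
  simp [latticeMap, not_le.2 h]

theorem latticeMap_injective : Injective latticeMap := by
  rintro ⟨u, v⟩ ⟨u', v'⟩ h
  simp only [latticeMap, Prod.mk.injEq] at h
  obtain ⟨rfl, h⟩ := h
  split_ifs at h <;> simp only [Prod.mk.injEq, and_true] <;> linarith

theorem toLattice_F (q : ℝ × ℝ) : toLattice (F q) = latticeMap (toLattice q) := by
  obtain ⟨x, y⟩ := q
  obtain ⟨w, rfl⟩ : ∃ w, y = Real.sqrt 3 * w := ⟨y / Real.sqrt 3, by field_simp⟩
  have h3 : Real.sqrt 3 ≠ 0 := by positivity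
  have h3' : (0 : ℝ) < Real.sqrt 3 := by positivity
  have hs : Real.sqrt 3 * Real.sqrt 3 = 3 := Real.mul_self_sqrt (by norm_num)
  have hw : (0 ≤ Real.sqrt 3 * w) ↔ 0 ≤ 2 * w := by
    rw [mul_nonneg_iff_of_pos_left h3', mul_nonneg_iff_of_pos_left two_pos]
  have e1 : Real.sqrt 3 * w / Real.sqrt 3 = w := by field_simp
  simp only [toLattice, F, latticeMap, s, e1, hw]
  have key : ∀ t : ℝ, (-(Real.sqrt 3 / 2) * (x - t) + Real.sqrt 3 * w / 2) / Real.sqrt 3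
      = -(x - t) / 2 + w / 2 := by intro t; field_simp
  have key2 : Real.sqrt 3 / 2 * (Real.sqrt 3 * w) = 3 / 2 * w := by
    linear_combination w / 2 * hs
  rw [key, key2]
  split_ifs <;> ext <;> simp only <;> ring

theorem minimalPeriod_toLattice (q : ℝ × ℝ) :
    minimalPeriod latticeMap (toLattice q) = minimalPeriod F q := by
  refine minimalPeriod_eq_minimalPeriod_iff.2 fun n => ?_
  have hsc : Semiconj toLattice F latticeMap := toLattice_F
  change latticeMap^[n] (toLattice q) = toLattice q ↔ F^[n] q = q
  rw [← (hsc.iterate_right n) q]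
  exact toLattice_injective.eq_iff

/-- The grid in lattice coordinates. -/
def latticeGrid : Set (ℝ × ℝ) :=
  {p | (∃ k : ℤ, p.1 - p.2 = 2 * k + 1) ∨ (∃ l : ℤ, p.2 = 2 * l) ∨ ∃ m : ℤ, p.1 = 2 * m}

theorem toLattice_mem_latticeGrid {q : ℝ × ℝ} (hq : q ∈ grid) : toLattice q ∈ latticeGrid := by
  have h3 : Real.sqrt 3 ≠ 0 := by positivity
  obtain ⟨x, y⟩ := q
  rcases hq with ⟨k, h⟩ | ⟨l, h⟩ | ⟨m, h⟩ <;> simp only at h <;> subst h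
  · refine Or.inl ⟨k, ?_⟩
    simp only [toLattice]; field_simp; ring
  · refine Or.inr (Or.inl ⟨l, ?_⟩)
    simp only [toLattice]; field_simp
  · refine Or.inr (Or.inr ⟨m, ?_⟩)
    simp only [toLattice]; field_simp; ring

theorem latticeMap_mem_latticeGrid {p : ℝ × ℝ} (hp : p ∈ latticeGrid) :
    latticeMap p ∈ latticeGrid := by
  obtain ⟨u, v⟩ := p
  rcases le_or_gt 0 v with h | h
  · rw [latticeMap_of_nonneg h]
    rcases hp with ⟨k, hk⟩ | ⟨l, hl⟩ | ⟨m, hm⟩ <;> simp only at *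
    · exact Or.inr (Or.inl ⟨-k, by push_cast; linarith⟩)
    · exact Or.inr (Or.inr ⟨l, hl⟩)
    · exact Or.inl ⟨m - 1, by push_cast; linarith⟩
  · rw [latticeMap_of_neg h]
    rcases hp with ⟨k, hk⟩ | ⟨l, hl⟩ | ⟨m, hm⟩ <;> simp only at *
    · exact Or.inr (Or.inl ⟨-k - 1, by push_cast; linarith⟩)
    · exact Or.inr (Or.inr ⟨l, hl⟩)
    · exact Or.inl ⟨m, by push_cast; linarith⟩

/-- The first return map to the section, the image of `Admissible` under `embed`, where a point
of the section is described by a point of the square `[-2, 2) × [-2, 2)` and an integer level. -/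
noncomputable def squareMap (x : ℝ × ℝ × ℤ) : ℝ × ℝ × ℤ :=
  if 0 < x.2.1 then
    if x.2.1 - x.1 + 1 < 2 then (x.2.1, x.2.1 - x.1 + 1, x.2.2)
    else (x.2.1, x.2.1 - x.1 - 3, x.2.2 + 1)
  else
    if -2 ≤ x.2.1 - x.1 - 1 then (x.2.1, x.2.1 - x.1 - 1, x.2.2)
    else (x.2.1, x.2.1 - x.1 + 3, x.2.2 - 1)

/-- The points of the square that occur at level `-1`. -/
def LowLevel (a b : ℝ) : Prop :=
  (a ≤ 0 ∧ a + 1 < b) ∨ (0 < a ∧ a + 1 ≤ b) ∨ (-1 < a ∧ a ≤ 0 ∧ 0 < b ∧ b ≤ a + 1)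

def Admissible : Set (ℝ × ℝ × ℤ) :=
  {x | -2 ≤ x.1 ∧ x.1 < 2 ∧ -2 ≤ x.2.1 ∧ x.2.1 < 2 ∧
    (0 ≤ x.2.2 ∨ (x.2.2 = -1 ∧ LowLevel x.1 x.2.1))}

noncomputable def embed (x : ℝ × ℝ × ℤ) : ℝ × ℝ :=
  if 0 ≤ x.2.2 then (x.1 - 2, 4 * x.2.2 + x.2.1 + 2)
  else if 0 < x.2.1 then (x.1 - 2, x.2.1 - 2) else (x.1, x.2.1 - 2)

/-- A set containing the image of `Admissible` under `embed`. -/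
def returnSection : Set (ℝ × ℝ) :=
  {p | (-4 ≤ p.1 ∧ p.1 < 0 ∧ 0 ≤ p.2) ∨
    (-4 ≤ p.1 ∧ -2 < p.2 ∧ p.2 < 0 ∧ LowLevel (p.1 + 2) (p.2 + 2)) ∨
    (-2 ≤ p.1 ∧ p.1 < -1 ∧ p.2 ≤ -2 ∧ p.1 - 1 < p.2)}

theorem squareMap_same_pos {a b : ℝ} {j : ℤ} (h : 0 < b) (h' : b - a + 1 < 2) :
    squareMap (a, b, j) = (b, b - a + 1, j) := by
  simp [squareMap, h, h']

theorem squareMap_up {a b : ℝ} {j : ℤ} (h : 0 < b) (h' : 2 ≤ b - a + 1) :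
    squareMap (a, b, j) = (b, b - a - 3, j + 1) := by
  simp [squareMap, h, not_lt.2 h']

theorem squareMap_same_neg {a b : ℝ} {j : ℤ} (h : b ≤ 0) (h' : -2 ≤ b - a - 1) :
    squareMap (a, b, j) = (b, b - a - 1, j) := by
  unfold squareMap
  rw [if_neg (not_lt.2 h), if_pos h']

theorem squareMap_down {a b : ℝ} {j : ℤ} (h : b ≤ 0) (h' : b - a - 1 < -2) :
    squareMap (a, b, j) = (b, b - a + 3, j - 1) := by
  unfold squareMap
  rw [if_neg (not_lt.2 h), if_neg (not_le.2 h')]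

theorem embed_nonneg {a b : ℝ} {j : ℤ} (h : 0 ≤ j) :
    embed (a, b, j) = (a - 2, 4 * j + b + 2) := by
  simp [embed, h]

theorem embed_neg_one_pos {a b : ℝ} (h : 0 < b) : embed (a, b, -1) = (a - 2, b - 2) := by
  simp [embed, h]

theorem embed_neg_one_nonpos {a b : ℝ} (h : b ≤ 0) : embed (a, b, -1) = (a, b - 2) := by
  simp [embed, not_lt.2 h]

theorem embed_mem_returnSection {x : ℝ × ℝ × ℤ} (hx : x ∈ Admissible) :
    embed x ∈ returnSection := by
  obtain ⟨a, b, j⟩ := x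
  obtain ⟨h1, h2, h3, h4, h | ⟨h, hl⟩⟩ := hx <;> simp only at h1 h2 h3 h4 h
  · rw [embed_nonneg h]
    have : (0 : ℝ) ≤ j := by exact_mod_cast h
    refine Or.inl ⟨?_, ?_, ?_⟩ <;> simp only <;> linarith
  · subst h
    rcases lt_or_ge 0 b with hb | hb
    · rw [embed_neg_one_pos hb]
      refine Or.inr (Or.inl ⟨?_, ?_, ?_, ?_⟩) <;> simp only
      · linarith
      · linarith
      · linarith
      · simpa using hl
    · rw [embed_neg_one_nonpos hb]
      simp only [LowLevel] at hl
      refine Or.inr (Or.inr ⟨?_, ?_, ?_, ?_⟩) <;> simp only <;>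
        rcases hl with ⟨_, _⟩ | ⟨_, _⟩ | ⟨_, _, _, _⟩ <;> linarith

theorem embed_injOn : Set.InjOn embed Admissible := by
  rintro ⟨a, b, j⟩ hx ⟨a', b', j'⟩ hx' he
  obtain ⟨h1, h2, h3, h4, h⟩ := hx
  obtain ⟨h1', h2', h3', h4', h'⟩ := hx'
  simp only [LowLevel] at h1 h2 h3 h4 h h1' h2' h3' h4' h'
  rcases h with h | ⟨rfl, hl⟩ <;> rcases h' with h' | ⟨rfl, hl'⟩
  · rw [embed_nonneg h, embed_nonneg h', Prod.mk.injEq] at he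
    have e1 : j < j' + 1 := by
      have : (j : ℝ) < j' + 1 := by linarith
      exact_mod_cast this
    have e2 : j' < j + 1 := by
      have : (j' : ℝ) < j + 1 := by linarith
      exact_mod_cast this
    obtain rfl : j = j' := by omega
    refine Prod.ext ?_ (Prod.ext ?_ rfl) <;> simp only <;> linarith
  · exfalso
    have hj : (0 : ℝ) ≤ j := by exact_mod_cast h
    rw [embed_nonneg h] at he
    rcases lt_or_ge 0 b' with hb | hb
    · rw [embed_neg_one_pos hb, Prod.mk.injEq] at he
      linarith
    · rw [embed_neg_one_nonpos hb, Prod.mk.injEq] at he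
      linarith
  · exfalso
    have hj : (0 : ℝ) ≤ j' := by exact_mod_cast h'
    rw [embed_nonneg h'] at he
    rcases lt_or_ge 0 b with hb | hb
    · rw [embed_neg_one_pos hb, Prod.mk.injEq] at he
      linarith
    · rw [embed_neg_one_nonpos hb, Prod.mk.injEq] at he
      linarith
  · rcases lt_or_ge 0 b with hb | hb <;> rcases lt_or_ge 0 b' with hb' | hb' <;>
      first
      | rw [embed_neg_one_pos hb] at he
      | rw [embed_neg_one_nonpos hb] at he
    all_goals
      first
      | rw [embed_neg_one_pos hb', Prod.mk.injEq] at he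
      | rw [embed_neg_one_nonpos hb', Prod.mk.injEq] at he
    · refine Prod.ext ?_ (Prod.ext ?_ rfl) <;> simp only <;> linarith
    · linarith
    · linarith
    · refine Prod.ext ?_ (Prod.ext ?_ rfl) <;> simp only <;> linarith

theorem squareMap_mapsTo : Set.MapsTo squareMap Admissible Admissible := by
  rintro ⟨a, b, j⟩ ⟨h1, h2, h3, h4, h⟩
  simp only [LowLevel] at h1 h2 h3 h4 h
  rcases lt_or_ge 0 b with hb | hb
  · rcases lt_or_ge (b - a + 1) 2 with hc | hc
    · rw [squareMap_same_pos hb hc]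
      refine ⟨h3, h4, ?_, hc, ?_⟩ <;> simp only [LowLevel]
      · linarith
      · rcases h with h | ⟨rfl, hl⟩
        · exact Or.inl h
        · refine Or.inr ⟨rfl, Or.inr (Or.inl ⟨hb, ?_⟩)⟩
          rcases hl with ⟨_, _⟩ | ⟨_, _⟩ | ⟨_, _, _, _⟩ <;> linarith
    · rw [squareMap_up hb hc]
      refine ⟨h3, h4, ?_, ?_, Or.inl ?_⟩ <;> simp only
      · linarith
      · linarith
      · rcases h with h | ⟨rfl, _⟩ <;> omega
  · rcases le_or_gt (-2) (b - a - 1) with hc | hc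
    · rw [squareMap_same_neg hb hc]
      refine ⟨h3, h4, hc, ?_, ?_⟩ <;> simp only [LowLevel]
      · linarith
      · rcases h with h | ⟨rfl, hl⟩
        · exact Or.inl h
        · refine Or.inr ⟨rfl, Or.inr (Or.inr ⟨?_, hb, ?_, ?_⟩)⟩ <;>
            rcases hl with ⟨_, _⟩ | ⟨_, _⟩ | ⟨_, _, _, _⟩ <;> linarith
    · rw [squareMap_down hb hc]
      refine ⟨h3, h4, ?_, ?_, ?_⟩ <;> simp only [LowLevel]
      · linarith
      · linarith
      · rcases h with h | ⟨rfl, hl⟩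
        · rcases h.lt_or_eq with h | rfl
          · left; omega
          · exact Or.inr ⟨rfl, Or.inl ⟨hb, by linarith⟩⟩
        · exfalso
          rcases hl with ⟨_, _⟩ | ⟨_, _⟩ | ⟨_, _, _, _⟩ <;> linarith

/-- `p` reaches `q` after `n` steps of `latticeMap` without meeting `returnSection` strictly
in between. -/
def ReturnsIn (n : ℕ) (p q : ℝ × ℝ) : Prop :=
  latticeMap^[n] p = q ∧ ∀ i, 0 < i → i < n → latticeMap^[i] p ∉ returnSection

theorem ReturnsIn.one {p q : ℝ × ℝ} (h : latticeMap p = q) : ReturnsIn 1 p q :=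
  ⟨h, fun i _ _ => by omega⟩

theorem ReturnsIn.cons {n : ℕ} {p q : ℝ × ℝ} (h : latticeMap p ∉ returnSection)
    (h' : ReturnsIn n (latticeMap p) q) : ReturnsIn (n + 1) p q := by
  refine ⟨h'.1, fun i hi0 hi => ?_⟩
  rcases i with _ | _ | i
  · omega
  · exact h
  · exact h'.2 (i + 1) (by omega) (by omega)

theorem ReturnsIn.cons_nonneg {n : ℕ} {u v : ℝ} {q : ℝ × ℝ} (hv : 0 ≤ v)
    (h : (v, v - u + 1) ∉ returnSection) (h' : ReturnsIn n (v, v - u + 1) q) :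
    ReturnsIn (n + 1) (u, v) q := by
  rw [← latticeMap_of_nonneg hv] at h h'
  exact h'.cons h

theorem ReturnsIn.cons_neg {n : ℕ} {u v : ℝ} {q : ℝ × ℝ} (hv : v < 0)
    (h : (v, v - u - 1) ∉ returnSection) (h' : ReturnsIn n (v, v - u - 1) q) :
    ReturnsIn (n + 1) (u, v) q := by
  rw [← latticeMap_of_neg hv] at h h'
  exact h'.cons h

theorem notMem_returnSection_of_nonneg {u v : ℝ} (hu : 0 ≤ u) : (u, v) ∉ returnSection := by
  simp only [returnSection, LowLevel, Set.mem_ofPred_eq]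
  rintro (⟨_, _, _⟩ | ⟨_, _, _, (⟨_, _⟩ | ⟨_, _⟩ | ⟨_, _, _, _⟩)⟩ | ⟨_, _, _, _⟩) <;> linarith

theorem notMem_returnSection_of_lt {u v : ℝ} (hu : u < -4) : (u, v) ∉ returnSection := by
  simp only [returnSection, LowLevel, Set.mem_ofPred_eq]
  rintro (⟨_, _, _⟩ | ⟨_, _, _, _⟩ | ⟨_, _, _, _⟩) <;> linarith

theorem notMem_returnSection_of_le {u v : ℝ} (hv : v ≤ -2) (h : v ≤ u - 1 ∨ -1 ≤ u ∨ u < -2) :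
    (u, v) ∉ returnSection := by
  simp only [returnSection, LowLevel, Set.mem_ofPred_eq]
  rintro (⟨_, _, _⟩ | ⟨_, _, _, _⟩ | ⟨_, _, _, _⟩) <;> rcases h with h | h | h <;> linarith

theorem ReturnsIn.six_steps {n : ℕ} {u v : ℝ} {q : ℝ × ℝ} (hu : u < 0) (hv : 4 ≤ v)
    (h : (u - 4, v - 4) ∉ returnSection) (h' : ReturnsIn n (u - 4, v - 4) q) :
    ReturnsIn (n + 6) (u, v) q := by
  refine .cons_nonneg (by linarith) (notMem_returnSection_of_nonneg (by linarith)) ?_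
  refine .cons_nonneg (by linarith) (notMem_returnSection_of_nonneg (by linarith)) ?_
  refine .cons_nonneg (by linarith) (notMem_returnSection_of_nonneg (by linarith)) ?_
  refine .cons_neg (by linarith)
    (notMem_returnSection_of_le (by linarith) (Or.inl (by linarith))) ?_
  refine .cons_neg (by linarith)
    (notMem_returnSection_of_le (by linarith) (Or.inr (Or.inr (by linarith)))) ?_
  refine .cons_neg (by linarith) ?_ ?_ <;> ring_nf at h h' ⊢ <;> assumption

theorem ReturnsIn.seven_steps_of_gt {u v : ℝ} (hu : u < 0) (hv : 2 < v) (hv' : v < 4) :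
    ReturnsIn 7 (u, v) (v - 4, v - u - 1) := by
  refine .cons_nonneg (by linarith) (notMem_returnSection_of_nonneg (by linarith)) ?_
  refine .cons_nonneg (by linarith) (notMem_returnSection_of_nonneg (by linarith)) ?_
  refine .cons_nonneg (by linarith) (notMem_returnSection_of_nonneg (by linarith)) ?_
  refine .cons_neg (by linarith)
    (notMem_returnSection_of_le (by linarith) (Or.inl (by linarith))) ?_
  refine .cons_neg (by linarith)
    (notMem_returnSection_of_le (by linarith) (Or.inr (Or.inr (by linarith)))) ?_
  refine .cons_neg (by linarith) (notMem_returnSection_of_lt (by linarith)) (.one ?_)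
  rw [latticeMap_of_neg (by linarith)]
  ext <;> simp only <;> ring

theorem ReturnsIn.seven_steps_of_le {u v : ℝ} (hu : u < 0) (hv : 0 ≤ v) (hv' : v ≤ 2)
    (huv : u < v - 1) : ReturnsIn 7 (u, v) (v - 4, v - u - 3) := by
  refine .cons_nonneg (by linarith) (notMem_returnSection_of_nonneg (by linarith)) ?_
  refine .cons_nonneg (by linarith) (notMem_returnSection_of_nonneg (by linarith)) ?_
  refine .cons_nonneg (by linarith) (notMem_returnSection_of_nonneg (by linarith)) ?_
  refine .cons_nonneg (by linarith) (notMem_returnSection_of_nonneg (by linarith)) ?_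
  refine .cons_neg (by linarith)
    (notMem_returnSection_of_le (by linarith) (Or.inl (by linarith))) ?_
  refine .cons_neg (by linarith)
    (notMem_returnSection_of_le (by linarith) (Or.inr (Or.inr (by linarith)))) (.one ?_)
  rw [latticeMap_of_neg (by linarith)]
  ext <;> simp only <;> ring

theorem ReturnsIn.seven_steps_of_ge {u v : ℝ} (hu : u < 0) (hv : 0 ≤ v) (hv' : v < 1)
    (huv : v - 1 ≤ u) : ReturnsIn 7 (u, v) (v - 2, v - u - 3) := by
  refine .cons_nonneg (by linarith) (notMem_returnSection_of_nonneg (by linarith)) ?_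
  refine .cons_nonneg (by linarith) (notMem_returnSection_of_nonneg (by linarith)) ?_
  refine .cons_nonneg (by linarith) (notMem_returnSection_of_nonneg (by linarith)) ?_
  refine .cons_nonneg (by linarith) (notMem_returnSection_of_nonneg (by linarith)) ?_
  refine .cons_nonneg (by linarith) (notMem_returnSection_of_nonneg (by linarith)) ?_
  refine .cons_neg (by linarith) ?_ (.one ?_)
  · simp only [returnSection, LowLevel, Set.mem_ofPred_eq]
    rintro (⟨_, _, _⟩ | ⟨_, _, _, (⟨_, _⟩ | ⟨_, _⟩ | ⟨_, _, _, _⟩)⟩ | ⟨_, _, _, _⟩) <;> linarith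
  rw [latticeMap_of_neg (by linarith)]
  ext <;> simp only <;> ring

theorem ReturnsIn.descend {n : ℕ} {v : ℝ} {q : ℝ × ℝ} (hv : 0 ≤ v) (m : ℕ) {u : ℝ} (hu : u < 0)
    (h : ReturnsIn n (u - 4 * m, v) q) : ReturnsIn (n + 6 * m) (u, 4 * m + v) q := by
  induction m generalizing u with
  | zero => simpa using h
  | succ m ih =>
    have hm : (0 : ℝ) ≤ m := m.cast_nonneg
    push_cast at h ⊢
    rw [show n + 6 * (m + 1) = n + 6 * m + 6 by ring]
    refine .six_steps hu (by linarith) (notMem_returnSection_of_lt (by linarith)) ?_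
    rw [show 4 * ((m : ℝ) + 1) + v - 4 = 4 * m + v by ring]
    refine ih (by linarith) ?_
    rwa [show u - 4 - 4 * (m : ℝ) = u - 4 * (m + 1) by ring]

theorem returnsIn_squareMap {x : ℝ × ℝ × ℤ} (hx : x ∈ Admissible) :
    ReturnsIn (6 * x.2.2 + 7).toNat (embed x) (embed (squareMap x)) := by
  have hTx := squareMap_mapsTo hx
  obtain ⟨a, b, j⟩ := x
  obtain ⟨h1, h2, h3, h4, h⟩ := hx
  simp only [LowLevel] at h1 h2 h3 h4 h ⊢
  rcases h with h | ⟨rfl, hl⟩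
  · lift j to ℕ using h
    have hj : (0 : ℝ) ≤ j := j.cast_nonneg
    rw [embed_nonneg (by positivity), show (6 * (j : ℤ) + 7).toNat = 7 + 6 * j by omega, add_assoc]
    refine ReturnsIn.descend (by linarith) j (by linarith) ?_
    rcases lt_or_ge 0 b with hb | hb
    · convert ReturnsIn.seven_steps_of_gt (u := a - 2 - 4 * j) (v := b + 2) (by linarith)
        (by linarith) (by linarith) using 1
      rcases lt_or_ge (b - a + 1) 2 with hc | hc
      · rw [squareMap_same_pos hb hc, embed_nonneg (by positivity)]
        push_cast
        ext <;> simp only <;> ring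
      · rw [squareMap_up hb hc, embed_nonneg (by positivity)]
        push_cast
        ext <;> simp only <;> ring
    · rcases le_or_gt (-2) (b - a - 1) with hc | hc
      · convert ReturnsIn.seven_steps_of_le (u := a - 2 - 4 * j) (v := b + 2) (by linarith)
          (by linarith) (by linarith) (by linarith) using 1
        rw [squareMap_same_neg hb hc, embed_nonneg (by positivity)]
        push_cast
        ext <;> simp only <;> ring
      · rw [squareMap_down hb hc]
        rcases Nat.eq_zero_or_pos j with rfl | hj1
        · rw [Nat.cast_zero, Nat.cast_zero, zero_sub]
          rcases lt_or_ge 0 (b - a + 3) with hd | hd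
          · convert ReturnsIn.seven_steps_of_le (u := a - 2 - 4 * 0) (v := b + 2) (by linarith)
              (by linarith) (by linarith) (by linarith) using 1
            rw [embed_neg_one_pos hd]
            ext <;> simp only <;> ring
          · convert ReturnsIn.seven_steps_of_ge (u := a - 2 - 4 * 0) (v := b + 2) (by linarith)
              (by linarith) (by linarith) (by linarith) using 1
            rw [embed_neg_one_nonpos hd]
            ext <;> simp only <;> ring
        · have : (1 : ℝ) ≤ j := by exact_mod_cast hj1
          convert ReturnsIn.seven_steps_of_le (u := a - 2 - 4 * j) (v := b + 2) (by linarith)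
            (by linarith) (by linarith) (by linarith) using 1
          rw [embed_nonneg (by omega)]
          push_cast
          ext <;> simp only <;> ring
  · rw [show (6 * (-1 : ℤ) + 7).toNat = 1 by norm_num]
    refine .one ?_
    rcases lt_or_ge 0 b with hb | hb
    · rw [embed_neg_one_pos hb, latticeMap_of_neg (by linarith)]
      rcases lt_or_ge (b - a + 1) 2 with hc | hc
      · have hd : 0 < b - a + 1 := by
          rcases hl with ⟨_, _⟩ | ⟨_, _⟩ | ⟨_, _, _, _⟩ <;> linarith
        rw [squareMap_same_pos hb hc, embed_neg_one_pos hd]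
        ext <;> simp only
        ring
      · rw [squareMap_up hb hc, embed_nonneg (by norm_num)]
        ext <;> simp only
        push_cast
        ring
    · have hab : a + 1 < b := by
        rcases hl with ⟨_, _⟩ | ⟨_, _⟩ | ⟨_, _, _, _⟩ <;> linarith
      rw [embed_neg_one_nonpos hb, latticeMap_of_neg (by linarith),
        squareMap_same_neg hb (by linarith), embed_neg_one_pos (by linarith)]
      ext <;> simp only
      ring

theorem exists_iterate_eq_embed_of_neg_of_nonneg {u v : ℝ} (hu : u < 0) (hv : 0 ≤ v) :
    ∃ n, ∃ x ∈ Admissible, latticeMap^[n] (u, v) = embed x := by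
  have mem : ∀ u v : ℝ, -4 ≤ u → u < 0 → 0 ≤ v → ∃ x ∈ Admissible, (u, v) = embed x := by
    intro u v hu hu' hv
    have h1 := Int.floor_le (v / 4)
    have h2 := Int.lt_floor_add_one (v / 4)
    have h3 : 0 ≤ ⌊v / 4⌋ := Int.floor_nonneg.2 (by linarith)
    refine ⟨(u + 2, v - 4 * ⌊v / 4⌋ - 2, ⌊v / 4⌋), ⟨?_, ?_, ?_, ?_, Or.inl h3⟩, ?_⟩
    · simp only; linarith
    · simp only; linarith
    · simp only; linarith
    · simp only; linarith
    · rw [embed_nonneg h3]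
      ext <;> simp only <;> ring
  rcases le_or_gt (-4) u with hu4 | hu4
  · obtain ⟨x, hx, h⟩ := mem u v hu4 hu hv
    exact ⟨0, x, hx, h⟩
  obtain ⟨m, r, hr0, hr4, rfl⟩ : ∃ (m : ℕ) (r : ℝ), 0 ≤ r ∧ r < 4 ∧ v = 4 * m + r := by
    have h1 := Nat.floor_le (a := v / 4) (by linarith)
    have h2 := Nat.lt_floor_add_one (v / 4)
    exact ⟨⌊v / 4⌋₊, v - 4 * ⌊v / 4⌋₊, by linarith, by linarith, by ring⟩
  have hm : (0 : ℝ) ≤ m := m.cast_nonneg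
  rcases lt_or_ge 2 r with hr | hr
  · obtain ⟨x, hx, h⟩ := mem (r - 4) (r - (u - 4 * m) - 1) (by linarith) (by linarith)
      (by linarith)
    exact ⟨_, x, hx, h ▸ (ReturnsIn.descend hr0 m hu
      (ReturnsIn.seven_steps_of_gt (by linarith) hr hr4)).1⟩
  · obtain ⟨x, hx, h⟩ := mem (r - 4) (r - (u - 4 * m) - 3) (by linarith) (by linarith)
      (by linarith)
    exact ⟨_, x, hx, h ▸ (ReturnsIn.descend hr0 m hu
      (ReturnsIn.seven_steps_of_le (by linarith) hr0 hr (by linarith))).1⟩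

/-- The points whose `latticeMap` orbit never meets the image of `Admissible` under
`embed`: two hexagons on which `latticeMap` has order six. -/
def Core : Set (ℝ × ℝ) :=
  {p | (0 ≤ p.1 ∧ p.1 ≤ 2 ∧ 0 ≤ p.2 ∧ p.2 ≤ 2 ∧ p.1 ≤ p.2 + 1 ∧ p.2 ≤ p.1 + 1) ∨
    (-2 < p.1 ∧ p.1 < 0 ∧ -2 < p.2 ∧ p.2 < 0 ∧ p.1 < p.2 + 1 ∧ p.2 < p.1 + 1)}

theorem exists_iterate_eq_embed {p : ℝ × ℝ} (hp : p ∉ Core) :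
    ∃ n, ∃ x ∈ Admissible, latticeMap^[n] p = embed x := by
  have succ : ∀ q, (∃ n, ∃ x ∈ Admissible, latticeMap^[n] (latticeMap q) = embed x) →
      ∃ n, ∃ x ∈ Admissible, latticeMap^[n] q = embed x :=
    fun q ⟨n, x, hx, h⟩ => ⟨n + 1, x, hx, h⟩
  have stepP : ∀ u v : ℝ, 0 ≤ v →
      (0 ≤ v - u + 1 ∨ v - u + 1 < 0 →
        ∃ n, ∃ x ∈ Admissible, latticeMap^[n] (v, v - u + 1) = embed x) →
      ∃ n, ∃ x ∈ Admissible, latticeMap^[n] (u, v) = embed x := fun u v hv h =>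
    succ _ (latticeMap_of_nonneg (u := u) hv ▸ h (le_or_gt _ _))
  have stepN : ∀ u v : ℝ, v < 0 →
      (v - u - 1 < 0 → ∃ n, ∃ x ∈ Admissible, latticeMap^[n] (v, v - u - 1) = embed x) →
      ∃ n, ∃ x ∈ Admissible, latticeMap^[n] (u, v) = embed x := by
    intro u v hv h
    refine succ _ ?_
    rw [latticeMap_of_neg hv]
    rcases le_or_gt 0 (v - u - 1) with h0 | h0
    · exact exists_iterate_eq_embed_of_neg_of_nonneg hv h0
    · exact h h0
  have neg : ∀ u v : ℝ, 0 ≤ u → v < 0 → ∃ n, ∃ x ∈ Admissible, latticeMap^[n] (u, v) = embed x := by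
    intro u v hu hv
    refine stepN _ _ hv fun h1 => stepN _ _ h1 fun h2 => stepN _ _ h2 fun h3 =>
      stepN _ _ h3 fun h4 => stepN _ _ h4 fun h5 => ?_
    linarith
  obtain ⟨u, v⟩ := p
  simp only [Core, Set.mem_ofPred_eq, not_or] at hp
  rcases le_or_gt 0 v with hv | hv <;> rcases le_or_gt 0 u with hu | hu
  · have pos := fun (u v : ℝ) (hu : 0 ≤ u) (hv : 0 ≤ v)
      (h : 0 ≤ v - u + 1 → ∃ n, ∃ x ∈ Admissible, latticeMap^[n] (v, v - u + 1) = embed x) =>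
      stepP u v hv fun h' => h'.elim h fun h' => neg _ _ hv h'
    refine pos _ _ hu hv fun h1 => pos _ _ hv h1 fun h2 => pos _ _ h1 h2 fun h3 =>
      pos _ _ h2 h3 fun h4 => ?_
    exact absurd ⟨hu, by linarith, hv, by linarith, by linarith, by linarith⟩ hp.1
  · exact exists_iterate_eq_embed_of_neg_of_nonneg hu hv
  · exact neg u v hu hv
  · refine stepN _ _ hv fun h1 => stepN _ _ h1 fun h2 => stepN _ _ h2 fun h3 =>
      stepN _ _ h3 fun h4 => ?_
    exact absurd ⟨by linarith, hu, by linarith, hv, by linarith, by linarith⟩ hp.2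

theorem minimalPeriod_of_hexagon {f : ℝ × ℝ → ℝ × ℝ} {H : Set (ℝ × ℝ)} {c : ℝ}
    (hf : ∀ u v, (u, v) ∈ H → f (u, v) = (v, v - u + c) ∧ (v, v - u + c) ∈ H) {u v : ℝ}
    (h : (u, v) ∈ H) :
    minimalPeriod f (u, v) = 6 ∨ (minimalPeriod f (u, v) = 1 ∧ u = c ∧ v = c) := by
  have two : ∀ u v, (u, v) ∈ H → f^[2] (u, v) = (v - u + c, 2 * c - u) := by
    intro u v h
    obtain ⟨h1, h1'⟩ := hf u v h
    rw [iterate_succ_apply, iterate_one, h1, (hf _ _ h1').1]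
    ext <;> simp only
    ring
  have three : ∀ u v, (u, v) ∈ H → f^[3] (u, v) = (2 * c - u, 2 * c - v) ∧
      (2 * c - u, 2 * c - v) ∈ H := by
    intro u v h
    obtain ⟨h1, h1'⟩ := hf u v h
    obtain ⟨h2, h2'⟩ := hf _ _ h1'
    obtain ⟨h3, h3'⟩ := hf _ _ h2'
    have e : ((v - u + c - v + c, v - u + c - v + c - (v - u + c) + c) : ℝ × ℝ) =
        (2 * c - u, 2 * c - v) := by ext <;> simp only <;> ring
    rw [e] at h3 h3'
    refine ⟨?_, h3'⟩
    rw [iterate_succ_apply, iterate_succ_apply, iterate_one, h1, h2, h3]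
  have six : f^[6] (u, v) = (u, v) := by
    rw [iterate_add_apply f 3 3, (three u v h).1, (three _ _ (three u v h).2).1]
    ext <;> simp only <;> ring
  by_cases hc : u = c ∧ v = c
  · refine Or.inr ⟨?_, hc⟩
    rw [minimalPeriod_eq_one_iff_isFixedPt]
    change f (u, v) = (u, v)
    rw [(hf u v h).1, hc.1, hc.2, sub_self, zero_add]
  · refine Or.inl (minimalPeriod_eq_of_dvd_108 (by norm_num) six (fun _ he => hc ?_)
      fun _ he => hc ?_)
    · rw [show 6 / 2 = 3 from rfl, (three u v h).1, Prod.mk.injEq] at he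
      constructor <;> linarith
    · rw [show 6 / 3 = 2 from rfl, two u v h, Prod.mk.injEq] at he
      constructor <;> linarith

theorem minimalPeriod_of_mem_core {p : ℝ × ℝ} (hp : p ∈ Core) :
    minimalPeriod latticeMap p = 6 ∨ (minimalPeriod latticeMap p = 1 ∧ p ∉ latticeGrid) := by
  have notMem : ∀ m : ℤ, ((2 * m + 1 : ℝ), (2 * m + 1 : ℝ)) ∉ latticeGrid := by
    rintro m (⟨k, hk⟩ | ⟨k, hk⟩ | ⟨k, hk⟩) <;> simp only at hk
    · have : (0 : ℤ) = 2 * k + 1 := by exact_mod_cast (by linarith : (0 : ℝ) = 2 * k + 1)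
      omega
    · have : 2 * m + 1 = 2 * k := by exact_mod_cast hk
      omega
    · have : 2 * m + 1 = 2 * k := by exact_mod_cast hk
      omega
  obtain ⟨u, v⟩ := p
  rcases hp with hp | hp
  · refine (minimalPeriod_of_hexagon (c := 1) (H := {p | 0 ≤ p.1 ∧ p.1 ≤ 2 ∧ 0 ≤ p.2 ∧ p.2 ≤ 2 ∧
      p.1 ≤ p.2 + 1 ∧ p.2 ≤ p.1 + 1}) ?_ hp).imp_right ?_
    · rintro u v ⟨h1, h2, h3, h4, h5, h6⟩
      simp only at h1 h2 h3 h4 h5 h6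
      refine ⟨latticeMap_of_nonneg h3, ?_, ?_, ?_, ?_, ?_, ?_⟩ <;> simp only <;> linarith
    · rintro ⟨h, rfl, rfl⟩
      exact ⟨h, by simpa using notMem 0⟩
  · refine (minimalPeriod_of_hexagon (c := -1) (H := {p | -2 < p.1 ∧ p.1 < 0 ∧ -2 < p.2 ∧
      p.2 < 0 ∧ p.1 < p.2 + 1 ∧ p.2 < p.1 + 1}) ?_ hp).imp_right ?_
    · rintro u v ⟨h1, h2, h3, h4, h5, h6⟩
      simp only at h1 h2 h3 h4 h5 h6
      refine ⟨latticeMap_of_neg h4, ?_, ?_, ?_, ?_, ?_, ?_⟩ <;> simp only <;> linarith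
    · rintro ⟨h, rfl, rfl⟩
      exact ⟨h, by have := notMem (-1); norm_num at this; exact this⟩

/-- After `k` steps of `squareMap` from `x`, the total return time and the point reached
satisfy `P`. -/
def SquarePath (k : ℕ) (x : ℝ × ℝ × ℤ) (P : ℤ → ℝ × ℝ × ℤ → Prop) : Prop :=
  P (∑ i ∈ Finset.range k, (6 * (squareMap^[i] x).2.2 + 7)) (squareMap^[k] x)

theorem SquarePath.refl {x : ℝ × ℝ × ℤ} {P : ℤ → ℝ × ℝ × ℤ → Prop} (h : P 0 x) :
    SquarePath 0 x P := by
  simpa [SquarePath] using h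

theorem SquarePath.cons {k : ℕ} {x : ℝ × ℝ × ℤ} {P : ℤ → ℝ × ℝ × ℤ → Prop}
    (h : SquarePath k (squareMap x) fun t y => P (t + (6 * x.2.2 + 7)) y) :
    SquarePath (k + 1) x P := by
  unfold SquarePath at h ⊢
  rw [Finset.sum_range_succ']
  exact h

theorem SquarePath.same_pos {k : ℕ} {j : ℤ} {a b : ℝ} {P : ℤ → ℝ × ℝ × ℤ → Prop} (h : 0 < b)
    (h' : b - a + 1 < 2)
    (hp : SquarePath k (b, b - a + 1, j) fun t y => P (t + (6 * j + 7)) y) :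
    SquarePath (k + 1) (a, b, j) P := by
  rw [← squareMap_same_pos h h'] at hp
  exact hp.cons

theorem SquarePath.up {k : ℕ} {j : ℤ} {a b : ℝ} {P : ℤ → ℝ × ℝ × ℤ → Prop} (h : 0 < b)
    (h' : 2 ≤ b - a + 1)
    (hp : SquarePath k (b, b - a - 3, j + 1) fun t y => P (t + (6 * j + 7)) y) :
    SquarePath (k + 1) (a, b, j) P := by
  rw [← squareMap_up h h'] at hp
  exact hp.cons

theorem SquarePath.same_neg {k : ℕ} {j : ℤ} {a b : ℝ} {P : ℤ → ℝ × ℝ × ℤ → Prop} (h : b ≤ 0)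
    (h' : -2 ≤ b - a - 1)
    (hp : SquarePath k (b, b - a - 1, j) fun t y => P (t + (6 * j + 7)) y) :
    SquarePath (k + 1) (a, b, j) P := by
  rw [← squareMap_same_neg h h'] at hp
  exact hp.cons

theorem SquarePath.down {k : ℕ} {j : ℤ} {a b : ℝ} {P : ℤ → ℝ × ℝ × ℤ → Prop} (h : b ≤ 0)
    (h' : b - a - 1 < -2)
    (hp : SquarePath k (b, b - a + 3, j - 1) fun t y => P (t + (6 * j + 7)) y) :
    SquarePath (k + 1) (a, b, j) P := by
  rw [← squareMap_down h h'] at hp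
  exact hp.cons

/-- A closed path of `k` steps computes the minimal period of `latticeMap`, provided `k` is the
minimal period of `squareMap`. -/
theorem SquarePath.minimalPeriod_latticeMap {k : ℕ} {T : ℤ} {x : ℝ × ℝ × ℤ} (hx : x ∈ Admissible)
    (hk : k ∣ 108) (h : SquarePath k x fun t y => t = T ∧ y = x)
    (h2 : 2 ∣ k → SquarePath (k / 2) x fun _ y => y ≠ x)
    (h3 : 3 ∣ k → SquarePath (k / 3) x fun _ y => y ≠ x) :
    (minimalPeriod latticeMap (embed x) : ℤ) = T := by
  have hk0 : 0 < k := Nat.pos_of_dvd_of_pos hk (by norm_num)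
  have hmin : minimalPeriod squareMap x = k := minimalPeriod_eq_of_dvd_108 hk h.2 h2 h3
  have hlevel : ∀ y ∈ Admissible, (0 : ℤ) < 6 * y.2.2 + 7 := by
    rintro y ⟨-, -, -, -, hy | ⟨hy, -⟩⟩ <;> omega
  have hsum := minimalPeriod_eq_sum_returnTime (f := latticeMap) (g := squareMap) (φ := embed)
    (V := Admissible) (τ := fun y => (6 * y.2.2 + 7).toNat)
    (fun y hy => by have := hlevel y hy; omega) squareMap_mapsTo embed_injOn
    (fun y hy => (returnsIn_squareMap hy).1)
    (fun y hy z hz i hi hi' he => (returnsIn_squareMap hy).2 i hi hi'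
      (he ▸ embed_mem_returnSection hz)) hx ⟨k, hk0, h.2⟩
  rw [hsum, hmin, ← h.1, Nat.cast_sum]
  refine Finset.sum_congr rfl fun i _ => ?_
  exact Int.toNat_of_nonneg (hlevel _ (squareMap_mapsTo.iterate i hx)).le

theorem minimalPeriod_posHexagon {a b : ℝ} {j : ℤ} (ha : 0 < a) (ha' : a < 2) (hb : 0 < b)
    (hb' : b < 2) (hab : a < b + 1) (hab' : b < a + 1) (hc : ¬(a = 1 ∧ b = 1))
    (hx : (a, b, j) ∈ Admissible) :
    (minimalPeriod latticeMap (embed (a, b, j)) : ℤ) = 36 * j + 42 := by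
  refine SquarePath.minimalPeriod_latticeMap (k := 6) hx (by norm_num) ?_
    (fun _ => ?_) (fun _ => ?_)
  all_goals
    repeat
      first
      | refine .same_pos (by linarith) (by linarith) ?_
      | refine .up (by linarith) (by linarith) ?_
    refine .refl ?_
  · refine ⟨by ring, ?_⟩
    ext <;> simp only <;> ring
  · intro he
    simp only [Prod.mk.injEq] at he
    exact hc ⟨by linarith, by linarith⟩
  · intro he
    simp only [Prod.mk.injEq] at he
    exact hc ⟨by linarith, by linarith⟩

theorem minimalPeriod_posHexagon_center {j : ℤ}
    (hx : (1, 1, j) ∈ Admissible) :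
    (minimalPeriod latticeMap (embed (1, 1, j)) : ℤ) = 6 * j + 7 := by
  refine SquarePath.minimalPeriod_latticeMap (k := 1) hx (by norm_num) ?_
    (by norm_num) (by norm_num)
  refine .same_pos (by linarith) (by linarith) (.refl ⟨by ring, ?_⟩)
  ext <;> simp only
  ring

theorem minimalPeriod_negHexagon {a b : ℝ} {j : ℤ} (ha : -2 ≤ a) (ha' : a ≤ 0) (hb : -2 ≤ b)
    (hb' : b ≤ 0) (hab : a ≤ b + 1) (hab' : b ≤ a + 1) (hc : ¬(a = -1 ∧ b = -1))
    (hx : (a, b, j) ∈ Admissible) :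
    (minimalPeriod latticeMap (embed (a, b, j)) : ℤ) = 36 * j + 42 := by
  refine SquarePath.minimalPeriod_latticeMap (k := 6) hx (by norm_num) ?_
    (fun _ => ?_) (fun _ => ?_)
  all_goals
    repeat
      first
      | refine .same_neg (by linarith) (by linarith) ?_
      | refine .down (by linarith) (by linarith) ?_
    refine .refl ?_
  · refine ⟨by ring, ?_⟩
    ext <;> simp only <;> ring
  · intro he
    simp only [Prod.mk.injEq] at he
    exact hc ⟨by linarith, by linarith⟩
  · intro he
    simp only [Prod.mk.injEq] at he
    exact hc ⟨by linarith, by linarith⟩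

theorem minimalPeriod_negHexagon_center {j : ℤ}
    (hx : (-1, -1, j) ∈ Admissible) :
    (minimalPeriod latticeMap (embed (-1, -1, j)) : ℤ) = 6 * j + 7 := by
  refine SquarePath.minimalPeriod_latticeMap (k := 1) hx (by norm_num) ?_
    (by norm_num) (by norm_num)
  refine .same_neg (by linarith) (by linarith) (.refl ⟨by ring, ?_⟩)
  ext <;> simp only
  ring

theorem minimalPeriod_mixedHexagon {a b : ℝ} {j : ℤ} (ha : -2 < a) (ha' : a < 0) (hb : 0 < b)
    (hb' : b < 2) (hab : a + 1 < b) (hab' : b < a + 3) (hc : ¬(a = -1 ∧ b = 1))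
    (hx : (a, b, j) ∈ Admissible) :
    (minimalPeriod latticeMap (embed (a, b, j)) : ℤ) = 36 * j + 60 := by
  refine SquarePath.minimalPeriod_latticeMap (k := 6) hx (by norm_num) ?_
    (fun _ => ?_) (fun _ => ?_)
  all_goals
    repeat
      first
      | refine .same_pos (by linarith) (by linarith) ?_
      | refine .up (by linarith) (by linarith) ?_
      | refine .same_neg (by linarith) (by linarith) ?_
      | refine .down (by linarith) (by linarith) ?_
    refine .refl ?_
  · refine ⟨by ring, ?_⟩
    ext <;> simp only <;> ring
  · intro he
    simp only [Prod.mk.injEq] at he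
    omega
  · intro he
    simp only [Prod.mk.injEq] at he
    exact hc ⟨by linarith, by linarith⟩

theorem minimalPeriod_mixedHexagon_center {j : ℤ}
    (hx : (-1, 1, j) ∈ Admissible) :
    (minimalPeriod latticeMap (embed (-1, 1, j)) : ℤ) = 12 * j + 20 := by
  refine SquarePath.minimalPeriod_latticeMap (k := 2) hx (by norm_num) ?_
    (fun _ => ?_) (by norm_num)
  all_goals
    repeat
      first
      | refine .same_pos (by linarith) (by linarith) ?_
      | refine .up (by linarith) (by linarith) ?_
      | refine .same_neg (by linarith) (by linarith) ?_
      | refine .down (by linarith) (by linarith) ?_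
    refine .refl ?_
  · refine ⟨by ring, ?_⟩
    ext <;> simp only <;> ring
  · intro he
    simp only [Prod.mk.injEq] at he
    omega

theorem minimalPeriod_lowerTriangle {a b : ℝ} {j : ℤ} (ha : -2 < a) (hb : b < 0)
    (hab : a + 1 < b) (hc : ¬(a = -5 / 3 ∧ b = -1 / 3))
    (hx : (a, b, j) ∈ Admissible) :
    (minimalPeriod latticeMap (embed (a, b, j)) : ℤ) = 72 * j + 102 := by
  refine SquarePath.minimalPeriod_latticeMap (k := 12) hx (by norm_num) ?_
    (fun _ => ?_) (fun _ => ?_)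
  all_goals
    repeat
      first
      | refine .same_pos (by linarith) (by linarith) ?_
      | refine .up (by linarith) (by linarith) ?_
      | refine .same_neg (by linarith) (by linarith) ?_
      | refine .down (by linarith) (by linarith) ?_
    refine .refl ?_
  · refine ⟨by ring, ?_⟩
    ext <;> simp only <;> ring
  · intro he
    simp only [Prod.mk.injEq] at he
    linarith
  · intro he
    simp only [Prod.mk.injEq] at he
    exact hc ⟨by linarith, by linarith⟩

theorem minimalPeriod_lowerTriangle_center {j : ℤ}
    (hx : (-5 / 3, -1 / 3, j) ∈ Admissible) :
    (minimalPeriod latticeMap (embed (-5 / 3, -1 / 3, j)) : ℤ) = 24 * j + 34 := by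
  refine SquarePath.minimalPeriod_latticeMap (k := 4) hx (by norm_num) ?_
    (fun _ => ?_) (by norm_num)
  all_goals
    repeat
      first
      | refine .same_pos (by linarith) (by linarith) ?_
      | refine .up (by linarith) (by linarith) ?_
      | refine .same_neg (by linarith) (by linarith) ?_
      | refine .down (by linarith) (by linarith) ?_
    refine .refl ?_
  · refine ⟨by ring, ?_⟩
    ext <;> simp only <;> ring
  · intro he
    simp only [Prod.mk.injEq] at he
    linarith

theorem minimalPeriod_upperTriangle {a b : ℝ} {j : ℤ} (ha : -2 < a) (hb : b < 2) (hab : a + 3 < b)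
    (hc : ¬(a = -5 / 3 ∧ b = 5 / 3))
    (hx : (a, b, j) ∈ Admissible) :
    (minimalPeriod latticeMap (embed (a, b, j)) : ℤ) = 72 * j + 138 := by
  refine SquarePath.minimalPeriod_latticeMap (k := 12) hx (by norm_num) ?_
    (fun _ => ?_) (fun _ => ?_)
  all_goals
    repeat
      first
      | refine .same_pos (by linarith) (by linarith) ?_
      | refine .up (by linarith) (by linarith) ?_
      | refine .same_neg (by linarith) (by linarith) ?_
      | refine .down (by linarith) (by linarith) ?_
    refine .refl ?_
  · refine ⟨by ring, ?_⟩
    ext <;> simp only <;> ring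
  · intro he
    simp only [Prod.mk.injEq] at he
    linarith
  · intro he
    simp only [Prod.mk.injEq] at he
    exact hc ⟨by linarith, by linarith⟩

theorem minimalPeriod_upperTriangle_center {j : ℤ}
    (hx : (-5 / 3, 5 / 3, j) ∈ Admissible) :
    (minimalPeriod latticeMap (embed (-5 / 3, 5 / 3, j)) : ℤ) = 24 * j + 46 := by
  refine SquarePath.minimalPeriod_latticeMap (k := 4) hx (by norm_num) ?_
    (fun _ => ?_) (by norm_num)
  all_goals
    repeat
      first
      | refine .same_pos (by linarith) (by linarith) ?_
      | refine .up (by linarith) (by linarith) ?_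
      | refine .same_neg (by linarith) (by linarith) ?_
      | refine .down (by linarith) (by linarith) ?_
    refine .refl ?_
  · refine ⟨by ring, ?_⟩
    ext <;> simp only <;> ring
  · intro he
    simp only [Prod.mk.injEq] at he
    linarith

theorem minimalPeriod_vertex_zero {j : ℤ}
    (hx : (-2, 0, j) ∈ Admissible) :
    (minimalPeriod latticeMap (embed (-2, 0, j)) : ℤ) = 18 * j + 27 := by
  refine SquarePath.minimalPeriod_latticeMap (k := 3) hx (by norm_num) ?_
    (by norm_num) (fun _ => ?_)
  all_goals
    repeat
      first
      | refine .same_pos (by linarith) (by linarith) ?_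
      | refine .up (by linarith) (by linarith) ?_
      | refine .same_neg (by linarith) (by linarith) ?_
      | refine .down (by linarith) (by linarith) ?_
    refine .refl ?_
  · refine ⟨by ring, ?_⟩
    ext <;> simp only <;> ring
  · intro he
    simp only [Prod.mk.injEq] at he
    linarith

theorem minimalPeriod_vertex_one {j : ℤ}
    (hx : (-2, 1, j) ∈ Admissible) :
    (minimalPeriod latticeMap (embed (-2, 1, j)) : ℤ) = 18 * j + 33 := by
  refine SquarePath.minimalPeriod_latticeMap (k := 3) hx (by norm_num) ?_
    (by norm_num) (fun _ => ?_)
  all_goals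
    repeat
      first
      | refine .same_pos (by linarith) (by linarith) ?_
      | refine .up (by linarith) (by linarith) ?_
      | refine .same_neg (by linarith) (by linarith) ?_
      | refine .down (by linarith) (by linarith) ?_
    refine .refl ?_
  · refine ⟨by ring, ?_⟩
    ext <;> simp only <;> ring
  · intro he
    simp only [Prod.mk.injEq] at he
    omega

set_option maxHeartbeats 1000000 in
theorem minimalPeriod_edge {b : ℝ} {j : ℤ} (hb : -1 < b) (hb' : b < 0)
    (hx : (-2, b, j) ∈ Admissible) :
    (minimalPeriod latticeMap (embed (-2, b, j)) : ℤ) = 108 * j + 180 := by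
  refine SquarePath.minimalPeriod_latticeMap (k := 18) hx (by norm_num) ?_
    (fun _ => ?_) (fun _ => ?_)
  all_goals
    repeat
      first
      | refine .same_pos (by linarith) (by linarith) ?_
      | refine .up (by linarith) (by linarith) ?_
      | refine .same_neg (by linarith) (by linarith) ?_
      | refine .down (by linarith) (by linarith) ?_
    refine .refl ?_
  · refine ⟨by ring, ?_⟩
    ext <;> simp only <;> ring
  · intro he
    simp only [Prod.mk.injEq] at he
    linarith
  · intro he
    simp only [Prod.mk.injEq] at he
    linarith

/-- If `x` describes a point of the section, its minimal period under `latticeMap` satisfies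
`P`. -/
def PeriodSatisfies (P : ℕ → Prop) (x : ℝ × ℝ × ℤ) : Prop :=
  x ∈ Admissible → P (minimalPeriod latticeMap (embed x))

theorem PeriodSatisfies.of_squareMap {P : ℕ → Prop} {x : ℝ × ℝ × ℤ}
    (h : PeriodSatisfies P (squareMap x)) : PeriodSatisfies P x := by
  intro hx
  have := h (squareMap_mapsTo hx)
  rwa [← (returnsIn_squareMap hx).1, minimalPeriod_iterate_of_injective latticeMap_injective]
    at this

theorem SquarePath.periodSatisfies {k : ℕ} {P : ℕ → Prop} {x : ℝ × ℝ × ℤ}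
    (h : SquarePath k x fun _ y => PeriodSatisfies P y) : PeriodSatisfies P x := by
  change PeriodSatisfies P (squareMap^[k] x) at h
  induction k generalizing x with
  | zero => exact h
  | succ k ih => exact .of_squareMap (ih h)

/-- The minimal periods of grid points. -/
def GridPeriod (p : ℕ) : Prop :=
  ∃ n : ℕ, p = 36 * n + 6 ∨ p = 18 * n + 9 ∨ p = 18 * n + 15 ∨ p = 108 * n + 72

/-- The minimal periods of points off the grid. -/
def GenericPeriod (p : ℕ) : Prop :=
  ∃ n : ℕ, p = 6 * n + 1 ∨ p = 12 * n + 8 ∨ p = 12 * n + 10 ∨ p = 36 * n + 6 ∨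
    p = 36 * n + 24 ∨ p = 36 * n + 30

theorem neg_one_le_of_mem_admissible {x : ℝ × ℝ × ℤ} (hx : x ∈ Admissible) : -1 ≤ x.2.2 := by
  obtain ⟨-, -, -, -, h | ⟨h, -⟩⟩ := hx <;> omega

theorem nonneg_of_mem_admissible {a b : ℝ} {j : ℤ} (hx : (a, b, j) ∈ Admissible)
    (h : ¬LowLevel a b) : 0 ≤ j := by
  obtain ⟨-, -, -, -, h' | ⟨-, h'⟩⟩ := hx
  · exact h'
  · exact absurd h' h

theorem not_lowLevel_of_nonpos {a b : ℝ} (hb : b ≤ 0) (hab : b ≤ a + 1) : ¬LowLevel a b := by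
  rintro (⟨_, _⟩ | ⟨_, _⟩ | ⟨_, _, _, _⟩) <;> linarith

theorem gridPeriod_vertex_zero {a b : ℝ} {j : ℤ} (ha : a = -2) (hb : b = 0) :
    PeriodSatisfies GridPeriod (a, b, j) := by
  subst ha hb
  intro hx
  have h := minimalPeriod_vertex_zero hx
  have hj := neg_one_le_of_mem_admissible hx
  exact ⟨(j + 1).toNat, by omega⟩

theorem gridPeriod_vertex_one {a b : ℝ} {j : ℤ} (ha : a = -2) (hb : b = 1) :
    PeriodSatisfies GridPeriod (a, b, j) := by
  subst ha hb
  intro hx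
  have h := minimalPeriod_vertex_one hx
  have hj := neg_one_le_of_mem_admissible hx
  exact ⟨(j + 1).toNat, by omega⟩

theorem gridPeriod_negHexagon {a b : ℝ} {j : ℤ} (ha : a = -2 ∨ a = 0) (hb : b ≤ 0)
    (hab : a ≤ b + 1) (hab' : b ≤ a + 1) : PeriodSatisfies GridPeriod (a, b, j) := by
  intro hx
  have hc : ¬(a = -1 ∧ b = -1) := by
    rintro ⟨rfl, -⟩
    norm_num at ha
  have ha' : a ≤ 0 := by rcases ha with rfl | rfl <;> norm_num
  have h := minimalPeriod_negHexagon (a := a) (b := b) hx.1 ha' hx.2.2.1 hb hab hab' hc hx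
  have hj := nonneg_of_mem_admissible hx (not_lowLevel_of_nonpos hb hab')
  exact ⟨(j + 1).toNat, by omega⟩

theorem gridPeriod_neg_two_of_lt_zero {a b : ℝ} {j : ℤ} (ha : a = -2) (hb : -1 < b)
    (hb' : b < 0) : PeriodSatisfies GridPeriod (a, b, j) := by
  subst ha
  intro hx
  have h := minimalPeriod_edge hb hb' hx
  have hj := neg_one_le_of_mem_admissible hx
  exact ⟨(j + 1).toNat, by omega⟩

theorem gridPeriod_zero_of_lt_one {a b : ℝ} {j : ℤ} (ha : a = 0) (hb : 0 < b) (hb' : b < 1) :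
    PeriodSatisfies GridPeriod (a, b, j) :=
  SquarePath.periodSatisfies <| .same_pos (by linarith) (by linarith) <|
    .up (by linarith) (by linarith) <| .down (by linarith) (by linarith) <|
    .refl <| gridPeriod_neg_two_of_lt_zero (by linarith) (by linarith) (by linarith)

theorem gridPeriod_zero_of_lt_two {a b : ℝ} {j : ℤ} (ha : a = 0) (hb : 1 < b) (hb' : b < 2) :
    PeriodSatisfies GridPeriod (a, b, j) :=
  SquarePath.periodSatisfies <| .up (by linarith) (by linarith) <|
    .down (by linarith) (by linarith) <| .same_neg (by linarith) (by linarith) <|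
    .refl <| gridPeriod_zero_of_lt_one (by linarith) (by linarith) (by linarith)

theorem gridPeriod_zero_of_lt_neg_one {a b : ℝ} {j : ℤ} (ha : a = 0) (hb : -2 < b)
    (hb' : b < -1) : PeriodSatisfies GridPeriod (a, b, j) :=
  SquarePath.periodSatisfies <| .down (by linarith) (by linarith) <|
    .up (by linarith) (by linarith) <| .down (by linarith) (by linarith) <|
    .refl <| gridPeriod_zero_of_lt_two (by linarith) (by linarith) (by linarith)

theorem gridPeriod_neg_two_of_lt_two {a b : ℝ} {j : ℤ} (ha : a = -2) (hb : 1 < b)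
    (hb' : b < 2) : PeriodSatisfies GridPeriod (a, b, j) :=
  SquarePath.periodSatisfies <| .up (by linarith) (by linarith) <|
    .same_pos (by linarith) (by linarith) <| .same_neg (by linarith) (by linarith) <|
    .refl <| gridPeriod_zero_of_lt_neg_one (by linarith) (by linarith) (by linarith)

theorem gridPeriod_neg_two_of_lt_one {a b : ℝ} {j : ℤ} (ha : a = -2) (hb : 0 < b)
    (hb' : b < 1) : PeriodSatisfies GridPeriod (a, b, j) :=
  SquarePath.periodSatisfies <| .up (by linarith) (by linarith) <|
    .same_neg (by linarith) (by linarith) <| .down (by linarith) (by linarith) <|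
    .refl <| gridPeriod_neg_two_of_lt_two (by linarith) (by linarith) (by linarith)

theorem gridPeriod_of_fst {x : ℝ × ℝ × ℤ} (ha : x.1 = -2 ∨ x.1 = 0) :
    PeriodSatisfies GridPeriod x := by
  intro hx
  have hx' := hx
  obtain ⟨a, b, j⟩ := x
  obtain ⟨-, -, h3, h4, -⟩ := hx'
  simp only at ha h3 h4
  revert hx
  change PeriodSatisfies GridPeriod (a, b, j)
  rcases ha with ha | ha
  · rcases le_or_gt b (-1) with h | h
    · exact gridPeriod_negHexagon (Or.inl ha) (by linarith) (by linarith) (by linarith)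
    rcases lt_trichotomy b 0 with h0 | h0 | h0
    · exact gridPeriod_neg_two_of_lt_zero ha h h0
    · exact gridPeriod_vertex_zero ha h0
    rcases lt_trichotomy b 1 with h1 | h1 | h1
    · exact gridPeriod_neg_two_of_lt_one ha h0 h1
    · exact gridPeriod_vertex_one ha h1
    · exact gridPeriod_neg_two_of_lt_two ha h1 h4
  · rcases h3.eq_or_lt with h | h
    · exact SquarePath.periodSatisfies <| .down (by linarith) (by linarith) <|
        .refl <| gridPeriod_vertex_one (by linarith) (by linarith)
    rcases lt_or_ge b (-1) with h' | h'
    · exact gridPeriod_zero_of_lt_neg_one ha h h'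
    rcases le_or_gt b 0 with h0 | h0
    · exact gridPeriod_negHexagon (Or.inr ha) h0 (by linarith) (by linarith)
    rcases lt_trichotomy b 1 with h1 | h1 | h1
    · exact gridPeriod_zero_of_lt_one ha h0 h1
    · exact SquarePath.periodSatisfies <| .up (by linarith) (by linarith) <|
        .down (by linarith) (by linarith) <|
        .refl <| gridPeriod_vertex_zero (by linarith) (by linarith)
    · exact gridPeriod_zero_of_lt_two ha h1 h4

theorem squareMap_fst (x : ℝ × ℝ × ℤ) : (squareMap x).1 = x.2.1 := by
  unfold squareMap
  split_ifs <;> rfl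

theorem gridPeriod_of_snd {x : ℝ × ℝ × ℤ} (hb : x.2.1 = -2 ∨ x.2.1 = 0) :
    PeriodSatisfies GridPeriod x :=
  .of_squareMap (gridPeriod_of_fst (by rwa [squareMap_fst]))

theorem gridPeriod_of_sub {a b : ℝ} {j : ℤ}
    (h : a - b = -3 ∨ a - b = -1 ∨ a - b = 1 ∨ a - b = 3) :
    PeriodSatisfies GridPeriod (a, b, j) := by
  intro hx
  obtain ⟨-, -, h3, h4, -⟩ := squareMap_mapsTo hx
  refine PeriodSatisfies.of_squareMap (gridPeriod_of_snd ?_) hx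
  unfold squareMap at h3 h4 ⊢
  split_ifs at h3 h4 ⊢ <;> simp only at *
  all_goals rcases h with h | h | h | h <;>
    first
    | exact Or.inl (by linarith)
    | exact Or.inr (by linarith)

theorem gridPeriod_of_embed_mem {x : ℝ × ℝ × ℤ} (h : embed x ∈ latticeGrid) :
    PeriodSatisfies GridPeriod x := by
  intro hx
  have hx' := hx
  obtain ⟨a, b, j⟩ := x
  obtain ⟨h1, h2, h3, h4, hj⟩ := hx'
  simp only at h1 h2 h3 h4 hj
  have key : (∃ k : ℤ, a - b = 2 * k + 1) ∨ (∃ l : ℤ, b = 2 * l) ∨ ∃ m : ℤ, a = 2 * m := by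
    have shift : ∀ d e : ℤ, (a - 2 * d, b - 2 * e) ∈ latticeGrid →
        (∃ k : ℤ, a - b = 2 * k + 1) ∨ (∃ l : ℤ, b = 2 * l) ∨ ∃ m : ℤ, a = 2 * m := by
      rintro d e (⟨k, hk⟩ | ⟨k, hk⟩ | ⟨k, hk⟩) <;> simp only at hk
      · exact Or.inl ⟨k + d - e, by push_cast; linarith⟩
      · exact Or.inr (Or.inl ⟨k + e, by push_cast; linarith⟩)
      · exact Or.inr (Or.inr ⟨k + d, by push_cast; linarith⟩)
    rcases hj with hj | ⟨rfl, -⟩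
    · refine shift 1 (-2 * j - 1) ?_
      rw [embed_nonneg hj] at h
      convert h using 2 <;> push_cast <;> ring
    · rcases lt_or_ge 0 b with hb | hb
      · rw [embed_neg_one_pos hb] at h
        exact shift 1 1 (by simpa using h)
      · rw [embed_neg_one_nonpos hb] at h
        exact shift 0 1 (by simpa using h)
  have even : ∀ c : ℝ, -2 ≤ c → c < 2 → (∃ k : ℤ, c = 2 * k) → c = -2 ∨ c = 0 := by
    rintro c hc hc' ⟨k, rfl⟩
    have e1 : -2 < k := by exact_mod_cast (by linarith : (-2 : ℝ) < k)
    have e2 : k < 1 := by exact_mod_cast (by linarith : (k : ℝ) < 1)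
    obtain rfl | rfl : k = -1 ∨ k = 0 := by omega
    · exact Or.inl (by norm_num)
    · exact Or.inr (by norm_num)
  rcases key with ⟨k, hk⟩ | hk | hk
  · refine gridPeriod_of_sub ?_ hx
    have e1 : -3 < k := by exact_mod_cast (by linarith : (-3 : ℝ) < k)
    have e2 : k < 2 := by exact_mod_cast (by linarith : (k : ℝ) < 2)
    rw [hk]
    obtain rfl | rfl | rfl | rfl : k = -2 ∨ k = -1 ∨ k = 0 ∨ k = 1 := by omega
    all_goals norm_num
  · exact gridPeriod_of_snd (even b h3 h4 hk) hx
  · exact gridPeriod_of_fst (even a h1 h2 hk) hx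

theorem genericPeriod_posHexagon {a b : ℝ} {j : ℤ} (ha : 0 < a) (hb : 0 < b) (hab : a < b + 1)
    (hab' : b < a + 1) : PeriodSatisfies GenericPeriod (a, b, j) := by
  intro hx
  have hj : 0 ≤ j := by
    refine nonneg_of_mem_admissible hx ?_
    rintro (⟨_, _⟩ | ⟨_, _⟩ | ⟨_, _, _, _⟩) <;> linarith
  refine ⟨(j + 1).toNat, ?_⟩
  by_cases hc : a = 1 ∧ b = 1
  · obtain ⟨rfl, rfl⟩ := hc
    have h := minimalPeriod_posHexagon_center hx
    omega
  · have h := minimalPeriod_posHexagon (a := a) (b := b) ha hx.2.1 hb hx.2.2.2.1 hab hab' hc hx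
    omega

theorem genericPeriod_negHexagon {a b : ℝ} {j : ℤ} (ha : a < 0) (hb : b < 0) (hab : a < b + 1)
    (hab' : b < a + 1) : PeriodSatisfies GenericPeriod (a, b, j) := by
  intro hx
  have hj := nonneg_of_mem_admissible hx (not_lowLevel_of_nonpos hb.le hab'.le)
  refine ⟨(j + 1).toNat, ?_⟩
  by_cases hc : a = -1 ∧ b = -1
  · obtain ⟨rfl, rfl⟩ := hc
    have h := minimalPeriod_negHexagon_center hx
    omega
  · have h := minimalPeriod_negHexagon (a := a) (b := b) hx.1 ha.le hx.2.2.1 hb.le hab.le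
        hab'.le hc hx
    omega

theorem genericPeriod_mixedHexagon {a b : ℝ} {j : ℤ} (ha : -2 < a) (ha' : a < 0) (hb : 0 < b)
    (hab : a + 1 < b) (hab' : b < a + 3) : PeriodSatisfies GenericPeriod (a, b, j) := by
  intro hx
  have hj := neg_one_le_of_mem_admissible hx
  simp only at hj
  refine ⟨(j + 1).toNat, ?_⟩
  by_cases hc : a = -1 ∧ b = 1
  · obtain ⟨rfl, rfl⟩ := hc
    have h := minimalPeriod_mixedHexagon_center hx
    omega
  · have h := minimalPeriod_mixedHexagon (b := b) ha ha' hb hx.2.2.2.1 hab hab' hc hx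
    omega

theorem genericPeriod_lowerTriangle {a b : ℝ} {j : ℤ} (ha : -2 < a) (hb : b < 0)
    (hab : a + 1 < b) : PeriodSatisfies GenericPeriod (a, b, j) := by
  intro hx
  have hj := neg_one_le_of_mem_admissible hx
  simp only at hj
  refine ⟨(2 * j + 2).toNat, ?_⟩
  by_cases hc : a = -5 / 3 ∧ b = -1 / 3
  · obtain ⟨rfl, rfl⟩ := hc
    have h := minimalPeriod_lowerTriangle_center hx
    omega
  · have h := minimalPeriod_lowerTriangle ha hb hab hc hx
    omega

theorem genericPeriod_upperTriangle {a b : ℝ} {j : ℤ} (ha : -2 < a) (hab : a + 3 < b) :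
    PeriodSatisfies GenericPeriod (a, b, j) := by
  intro hx
  have hj := neg_one_le_of_mem_admissible hx
  simp only at hj
  refine ⟨(2 * j + 3).toNat, ?_⟩
  by_cases hc : a = -5 / 3 ∧ b = 5 / 3
  · obtain ⟨rfl, rfl⟩ := hc
    have h := minimalPeriod_upperTriangle_center hx
    omega
  · have h := minimalPeriod_upperTriangle (b := b) ha hx.2.2.2.1 hab hc hx
    omega

theorem genericPeriod_of_pos_of_lt {a b : ℝ} {j : ℤ} (ha : 0 < a) (hb : b < 2) (hab : a + 1 < b) :
    PeriodSatisfies GenericPeriod (a, b, j) :=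
  SquarePath.periodSatisfies <| .up (by linarith) (by linarith) <|
    .down (by linarith) (by linarith) <|
    .refl <| genericPeriod_lowerTriangle (by linarith) (by linarith) (by linarith)

theorem genericPeriod_of_neg_of_lt {a b : ℝ} {j : ℤ} (ha : a < 0) (hb : -2 < b)
    (hab : b + 1 < a) : PeriodSatisfies GenericPeriod (a, b, j) :=
  SquarePath.periodSatisfies <| .down (by linarith) (by linarith) <|
    .refl <| genericPeriod_upperTriangle (by linarith) (by linarith)

theorem genericPeriod_of_pos_of_neg {a b : ℝ} {j : ℤ} (ha : 0 < a) (hb : b < 0)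
    (hab : a < b + 1) : PeriodSatisfies GenericPeriod (a, b, j) :=
  SquarePath.periodSatisfies <| .same_neg (by linarith) (by linarith) <|
    .refl <| genericPeriod_of_neg_of_lt (by linarith) (by linarith) (by linarith)

theorem gridPeriod_or_genericPeriod (x : ℝ × ℝ × ℤ) :
    PeriodSatisfies (fun p => GridPeriod p ∨ GenericPeriod p) x := by
  intro hx
  have hx' := hx
  obtain ⟨a, b, j⟩ := x
  obtain ⟨h1, h2, h3, h4, -⟩ := hx'
  simp only at h1 h2 h3 h4
  by_cases ha : a = -2 ∨ a = 0
  · exact Or.inl (gridPeriod_of_fst ha hx)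
  by_cases hb : b = -2 ∨ b = 0
  · exact Or.inl (gridPeriod_of_snd hb hx)
  by_cases hab : a - b = -3 ∨ a - b = -1 ∨ a - b = 1 ∨ a - b = 3
  · exact Or.inl (gridPeriod_of_sub hab hx)
  refine Or.inr ?_
  revert hx
  change PeriodSatisfies GenericPeriod (a, b, j)
  simp only [not_or] at ha hb hab
  obtain ⟨hab1, hab2, hab3, hab4⟩ := hab
  replace h1 := lt_of_le_of_ne h1 (Ne.symm ha.1)
  replace h3 := lt_of_le_of_ne h3 (Ne.symm hb.1)
  rcases lt_or_gt_of_ne ha.2 with ha | ha <;> rcases lt_or_gt_of_ne hb.2 with hb | hb <;>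
    rcases lt_or_gt_of_ne hab2 with h5 | h5 <;> rcases lt_or_gt_of_ne hab3 with h6 | h6 <;>
    try linarith
  · exact genericPeriod_lowerTriangle h1 hb (by linarith)
  · exact genericPeriod_negHexagon ha hb (by linarith) (by linarith)
  · exact genericPeriod_of_neg_of_lt ha h3 (by linarith)
  · rcases lt_or_gt_of_ne hab1 with h7 | h7
    · exact genericPeriod_upperTriangle h1 (by linarith)
    · exact genericPeriod_mixedHexagon h1 ha hb (by linarith) (by linarith)
  · exact SquarePath.periodSatisfies <| .same_pos (by linarith) (by linarith) <|
      .refl <| genericPeriod_of_pos_of_lt (by linarith) (by linarith) (by linarith)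
  · exact genericPeriod_of_pos_of_neg ha hb (by linarith)
  · rcases lt_or_gt_of_ne hab4 with h7 | h7
    · exact SquarePath.periodSatisfies <| .down (by linarith) (by linarith) <| .refl <|
        genericPeriod_mixedHexagon (by linarith) (by linarith) (by linarith) (by linarith)
          (by linarith)
    · exact SquarePath.periodSatisfies <| .down (by linarith) (by linarith) <|
        .refl <| genericPeriod_lowerTriangle (by linarith) (by linarith) (by linarith)
  · exact genericPeriod_of_pos_of_lt ha h4 (by linarith)
  · exact genericPeriod_posHexagon ha hb (by linarith) (by linarith)
  · exact SquarePath.periodSatisfies <| .same_pos (by linarith) (by linarith) <|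
      .refl <| genericPeriod_of_pos_of_neg (by linarith) (by linarith) (by linarith)

theorem gridPeriod_minimalPeriod {p : ℝ × ℝ} (hp : p ∈ latticeGrid) :
    GridPeriod (minimalPeriod latticeMap p) := by
  by_cases hc : p ∈ Core
  · rcases minimalPeriod_of_mem_core hc with h | ⟨-, h⟩
    · exact ⟨0, Or.inl h⟩
    · exact absurd hp h
  · obtain ⟨n, x, hx, h⟩ := exists_iterate_eq_embed hc
    rw [← minimalPeriod_iterate_of_injective latticeMap_injective n, h]
    refine gridPeriod_of_embed_mem ?_ hx
    rw [← h]
    exact Set.MapsTo.iterate (fun _ => latticeMap_mem_latticeGrid) n hp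

theorem gridPeriod_or_genericPeriod_minimalPeriod (p : ℝ × ℝ) :
    GridPeriod (minimalPeriod latticeMap p) ∨ GenericPeriod (minimalPeriod latticeMap p) := by
  by_cases hc : p ∈ Core
  · rcases minimalPeriod_of_mem_core hc with h | ⟨h, -⟩
    · exact Or.inl ⟨0, Or.inl h⟩
    · exact Or.inr ⟨0, Or.inl h⟩
  · obtain ⟨n, x, hx, h⟩ := exists_iterate_eq_embed hc
    rw [← minimalPeriod_iterate_of_injective latticeMap_injective n, h]
    exact gridPeriod_or_genericPeriod x hx

theorem exists_minimalPeriod_F {p : ℕ} (h : ∃ q, minimalPeriod latticeMap q = p) :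
    ∃ q, minimalPeriod F q = p := by
  obtain ⟨q, hq⟩ := h
  exact ⟨ofLattice q, by rw [← minimalPeriod_toLattice, toLattice_ofLattice, hq]⟩

theorem mem_admissible_of_lt {a b : ℝ} {j : ℤ} (ha : -2 ≤ a) (ha' : a ≤ 0) (hb : -2 ≤ b)
    (hb' : b < 2) (hab : a + 1 < b) (hj : -1 ≤ j) : (a, b, j) ∈ Admissible := by
  refine ⟨ha, by linarith, hb, hb', ?_⟩
  rcases hj.eq_or_lt with h | h
  · exact Or.inr ⟨h.symm, Or.inl ⟨ha', hab⟩⟩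
  · exact Or.inl (by simp only; omega)

theorem exists_minimalPeriod_eq {p : ℕ} {T : ℤ} {x : ℝ × ℝ × ℤ}
    (h : (minimalPeriod latticeMap (embed x) : ℤ) = T) (hT : T = p) :
    ∃ q, minimalPeriod latticeMap q = p :=
  ⟨embed x, by exact_mod_cast h.trans hT⟩

theorem exists_minimalPeriod_of_gridPeriod {p : ℕ} (hp : GridPeriod p) :
    ∃ q, minimalPeriod latticeMap q = p := by
  obtain ⟨n, rfl | rfl | rfl | rfl⟩ := hp
  · rcases n with _ | n
    · refine ⟨(0, 0), ?_⟩
      rcases minimalPeriod_of_mem_core (p := (0, 0)) (Or.inl (by norm_num)) with h | ⟨-, h⟩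
      · exact h
      · exact absurd (Or.inr (Or.inl ⟨0, by simp⟩)) h
    · exact exists_minimalPeriod_eq
        (minimalPeriod_negHexagon (a := -2) (b := -2) (j := n) (by norm_num) (by norm_num)
        (by norm_num) (by norm_num) (by norm_num) (by norm_num) (by norm_num)
        ⟨by norm_num, by norm_num, by norm_num, by norm_num, Or.inl (by simp)⟩)
        (by push_cast; ring)
  · exact exists_minimalPeriod_eq
      (minimalPeriod_vertex_zero (j := n - 1) (mem_admissible_of_lt (by norm_num)
      (by norm_num) (by norm_num) (by norm_num) (by norm_num) (by omega)))
      (by push_cast; ring)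
  · exact exists_minimalPeriod_eq
      (minimalPeriod_vertex_one (j := n - 1) (mem_admissible_of_lt (by norm_num)
      (by norm_num) (by norm_num) (by norm_num) (by norm_num) (by omega)))
      (by push_cast; ring)
  · exact exists_minimalPeriod_eq
      (minimalPeriod_edge (b := -1 / 2) (j := n - 1) (by norm_num) (by norm_num)
      (mem_admissible_of_lt (by norm_num) (by norm_num) (by norm_num) (by norm_num)
        (by norm_num) (by omega)))
      (by push_cast; ring)

theorem exists_minimalPeriod_of_genericPeriod {p : ℕ} (hp : GenericPeriod p) :
    ∃ q, minimalPeriod latticeMap q = p := by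
  obtain ⟨n, rfl | rfl | rfl | rfl | rfl | rfl⟩ := hp
  · rcases n with _ | n
    · refine ⟨(1, 1), minimalPeriod_eq_one_iff_isFixedPt.2 ?_⟩
      change latticeMap (1, 1) = (1, 1)
      rw [latticeMap_of_nonneg zero_le_one, sub_self, zero_add]
    · exact exists_minimalPeriod_eq (minimalPeriod_posHexagon_center (j := n)
        ⟨by norm_num, by norm_num, by norm_num, by norm_num, Or.inl (by simp)⟩)
        (by push_cast; ring)
  · exact exists_minimalPeriod_eq
      (minimalPeriod_mixedHexagon_center (j := n - 1) (mem_admissible_of_lt (by norm_num)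
      (by norm_num) (by norm_num) (by norm_num) (by norm_num) (by omega)))
      (by push_cast; ring)
  · obtain ⟨m, rfl | rfl⟩ := n.even_or_odd'
    · exact exists_minimalPeriod_eq
        (minimalPeriod_lowerTriangle_center (j := m - 1) (mem_admissible_of_lt
        (by norm_num) (by norm_num) (by norm_num) (by norm_num) (by norm_num) (by omega)))
        (by push_cast; ring)
    · exact exists_minimalPeriod_eq
        (minimalPeriod_upperTriangle_center (j := m - 1) (mem_admissible_of_lt
        (by norm_num) (by norm_num) (by norm_num) (by norm_num) (by norm_num) (by omega)))
        (by push_cast; ring)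
  · exact exists_minimalPeriod_of_gridPeriod ⟨n, Or.inl rfl⟩
  · exact exists_minimalPeriod_eq
      (minimalPeriod_mixedHexagon (a := -3 / 2) (b := 1) (j := n - 1) (by norm_num)
      (by norm_num) (by norm_num) (by norm_num) (by norm_num) (by norm_num) (by norm_num)
      (mem_admissible_of_lt (by norm_num) (by norm_num) (by norm_num) (by norm_num)
        (by norm_num) (by omega)))
      (by push_cast; ring)
  · obtain ⟨m, rfl | rfl⟩ := n.even_or_odd'
    · exact exists_minimalPeriod_eq
        (minimalPeriod_lowerTriangle (a := -7 / 4) (b := -1 / 4) (j := m - 1)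
        (by norm_num) (by norm_num) (by norm_num) (by norm_num) (mem_admissible_of_lt
        (by norm_num) (by norm_num) (by norm_num) (by norm_num) (by norm_num) (by omega)))
        (by push_cast; ring)
    · exact exists_minimalPeriod_eq
        (minimalPeriod_upperTriangle (a := -7 / 4) (b := 7 / 4) (j := m - 1)
        (by norm_num) (by norm_num) (by norm_num) (by norm_num) (mem_admissible_of_lt
        (by norm_num) (by norm_num) (by norm_num) (by norm_num) (by norm_num) (by omega)))
        (by push_cast; ring)


/-- Every grid point is periodic with minimal period `36n+6`, `18n+9`,
`18n+15` or `108n+72`; `F` is pointwise periodic, and its set of minimal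
periods is the displayed union of arithmetic families. -/
theorem pointwise_periodic_pi_div_three :
    (∀ q ∈ grid, ∃ n : ℕ,
        Function.minimalPeriod F q = 36 * n + 6 ∨
        Function.minimalPeriod F q = 18 * n + 9 ∨
        Function.minimalPeriod F q = 18 * n + 15 ∨
        Function.minimalPeriod F q = 108 * n + 72) ∧
    (∀ q : ℝ × ℝ, ∃ p : ℕ, 1 ≤ p ∧ F^[p] q = q) ∧
    {p : ℕ | ∃ q : ℝ × ℝ, Function.minimalPeriod F q = p} =
      {p : ℕ | ∃ n : ℕ, p = 6 * n + 1} ∪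
      {p : ℕ | ∃ n : ℕ, p = 12 * n + 8} ∪
      {p : ℕ | ∃ n : ℕ, p = 12 * n + 10} ∪
      {p : ℕ | ∃ n : ℕ, p = 18 * n + 9} ∪
      {p : ℕ | ∃ n : ℕ, p = 18 * n + 15} ∪
      {p : ℕ | ∃ n : ℕ, p = 36 * n + 6} ∪
      {p : ℕ | ∃ n : ℕ, p = 36 * n + 24} ∪
      {p : ℕ | ∃ n : ℕ, p = 36 * n + 30} ∪
      {p : ℕ | ∃ n : ℕ, p = 108 * n + 72} := by
  refine ⟨fun q hq => ?_, fun q => ?_, ?_⟩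
  · rw [← minimalPeriod_toLattice]
    exact gridPeriod_minimalPeriod (toLattice_mem_latticeGrid hq)
  · refine ⟨minimalPeriod F q, ?_, isPeriodicPt_minimalPeriod F q⟩
    rw [← minimalPeriod_toLattice]
    obtain ⟨n, h⟩ | ⟨n, h⟩ := gridPeriod_or_genericPeriod_minimalPeriod (toLattice q) <;> omega
  · ext p
    simp only [Set.mem_union, Set.mem_ofPred_eq]
    constructor
    · rintro ⟨q, rfl⟩
      rw [← minimalPeriod_toLattice]
      have h := gridPeriod_or_genericPeriod_minimalPeriod (toLattice q)
      simp only [GridPeriod, GenericPeriod, exists_or] at h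
      tauto
    · intro h
      have hp : GridPeriod p ∨ GenericPeriod p := by
        simp only [GridPeriod, GenericPeriod, exists_or]
        tauto
      exact exists_minimalPeriod_F (hp.elim exists_minimalPeriod_of_gridPeriod
        exists_minimalPeriod_of_genericPeriod)
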